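/- Let 𝕜 be an algebraically closed field of characteristic zero. Let Ω_1,…,Ω_d ∈ 𝕜[x,y,z] be homogeneous polynomials with isolated singularities whose degrees are pairwise distinct and each at least 5, and let ξ_1,…,ξ_d ∈ 𝕜. Then the Poisson algebra P = P_{Ω_1−ξ_1} ⊗_𝕜 ⋯ ⊗_𝕜 P_{Ω_d−ξ_d} is Dixmier: every injective Poisson 𝕜-algebra endomorphism of P is bijective. -/

import Mathlib

open scoped TensorProduct

/-- A Poisson bracket on a commutative algebra `A` over `𝕜`: a bilinear, antisymmetric
bracket satisfying the Jacobi identity and the Leibniz rule. -/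
structure PoissonStructure (𝕜 A : Type*) [CommRing 𝕜] [CommRing A] [Algebra 𝕜 A] where
  bracket : A → A → A
  add_left : ∀ a b c : A, bracket (a + b) c = bracket a c + bracket b c
  smul_left : ∀ (r : 𝕜) (a b : A), bracket (r • a) b = r • bracket a b
  antisymm : ∀ a b : A, bracket a b = - bracket b a
  jacobi : ∀ a b c : A,
    bracket a (bracket b c) + bracket b (bracket c a) + bracket c (bracket a b) = 0
  leibniz : ∀ a b c : A, bracket a (b * c) = bracket a b * c + b * bracket a c

/-- `f` is a morphism of Poisson algebras. -/
def IsPoissonHom {𝕜 A B : Type*} [CommRing 𝕜] [CommRing A] [CommRing B]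
    [Algebra 𝕜 A] [Algebra 𝕜 B]
    (PA : PoissonStructure 𝕜 A) (PB : PoissonStructure 𝕜 B) (f : A →ₐ[𝕜] B) : Prop :=
  ∀ a b : A, f (PA.bracket a b) = PB.bracket (f a) (f b)

/-- A Poisson algebra is Dixmier if every injective Poisson endomorphism is bijective. -/
def IsDixmier (𝕜 A : Type*) [CommRing 𝕜] [CommRing A] [Algebra 𝕜 A]
    (PA : PoissonStructure 𝕜 A) : Prop :=
  ∀ f : A →ₐ[𝕜] A, IsPoissonHom PA PA f → Function.Injective f → Function.Bijective f

/-- The tensor-product Poisson bracket on `A ⊗[𝕜] B`. -/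
def IsTensorBracket {𝕜 A B : Type*} [CommRing 𝕜] [CommRing A] [CommRing B]
    [Algebra 𝕜 A] [Algebra 𝕜 B] (PA : PoissonStructure 𝕜 A) (PB : PoissonStructure 𝕜 B)
    (PT : PoissonStructure 𝕜 (A ⊗[𝕜] B)) : Prop :=
  ∀ (a a' : A) (b b' : B),
    PT.bracket (a ⊗ₜ[𝕜] b) (a' ⊗ₜ[𝕜] b') =
      PA.bracket a a' ⊗ₜ[𝕜] (b * b') + (a * a') ⊗ₜ[𝕜] PB.bracket b b'

/-- `A` is `R`-Dixmier: every injective Poisson morphism `A → A ⊗ R` has image `A ⊗ 𝕜·1`. -/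
def IsRelDixmier (𝕜 A R : Type*) [CommRing 𝕜] [CommRing A] [CommRing R]
    [Algebra 𝕜 A] [Algebra 𝕜 R] (PA : PoissonStructure 𝕜 A)
    (PT : PoissonStructure 𝕜 (A ⊗[𝕜] R)) : Prop :=
  ∀ f : A →ₐ[𝕜] A ⊗[𝕜] R, IsPoissonHom PA PT f → Function.Injective f →
    Set.range f = Set.range fun a : A => a ⊗ₜ[𝕜] (1 : R)

/-- A Poisson algebra is Poisson simple if its only Poisson ideals are `0` and the whole ring. -/
def IsPoissonSimple {𝕜 A : Type*} [CommRing 𝕜] [CommRing A] [Algebra 𝕜 A]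
    (PA : PoissonStructure 𝕜 A) : Prop :=
  ∀ I : Ideal A, (∀ x : A, ∀ y ∈ I, PA.bracket x y ∈ I) → I = ⊥ ∨ I = ⊤

open MvPolynomial in
/-- The Jacobian Poisson bracket with potential `Ω` on `𝕜[x,y,z]`. -/
noncomputable def jacBracket {𝕜 : Type*} [CommRing 𝕜]
    (Ω f g : MvPolynomial (Fin 3) 𝕜) : MvPolynomial (Fin 3) 𝕜 :=
  Matrix.det (Matrix.of
    ![![pderiv 0 f, pderiv 1 f, pderiv 2 f],
      ![pderiv 0 g, pderiv 1 g, pderiv 2 g],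
      ![pderiv 0 Ω, pderiv 1 Ω, pderiv 2 Ω]])

open MvPolynomial in
/-- `Ω` has an isolated singularity at the origin. -/
def HasIsolatedSingularity {𝕜 : Type*} [Field 𝕜] (Ω : MvPolynomial (Fin 3) 𝕜) : Prop :=
  FiniteDimensional 𝕜
    (MvPolynomial (Fin 3) 𝕜 ⧸ Ideal.span {pderiv (0 : Fin 3) Ω, pderiv 1 Ω, pderiv 2 Ω})

/-- The underlying commutative algebra of `P_{Ω-ξ} = 𝕜[x,y,z]/(Ω-ξ)`. -/
def PQuot (𝕜 : Type*) [CommRing 𝕜] (Ω : MvPolynomial (Fin 3) 𝕜) (ξ : 𝕜) : Type _ :=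
  MvPolynomial (Fin 3) 𝕜 ⧸ Ideal.span {Ω - MvPolynomial.C ξ}

noncomputable instance {𝕜 : Type*} [CommRing 𝕜] (Ω : MvPolynomial (Fin 3) 𝕜) (ξ : 𝕜) :
    CommRing (PQuot 𝕜 Ω ξ) :=
  inferInstanceAs (CommRing (MvPolynomial (Fin 3) 𝕜 ⧸ Ideal.span {Ω - MvPolynomial.C ξ}))

noncomputable instance {𝕜 : Type*} [CommRing 𝕜] (Ω : MvPolynomial (Fin 3) 𝕜) (ξ : 𝕜) :
    Algebra 𝕜 (PQuot 𝕜 Ω ξ) :=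
  inferInstanceAs (Algebra 𝕜 (MvPolynomial (Fin 3) 𝕜 ⧸ Ideal.span {Ω - MvPolynomial.C ξ}))

/-- The canonical (surjective) projection `𝕜[x,y,z] → P_{Ω-ξ}`. -/
noncomputable def PQuot.mk {𝕜 : Type*} [CommRing 𝕜] (Ω : MvPolynomial (Fin 3) 𝕜) (ξ : 𝕜)
    (f : MvPolynomial (Fin 3) 𝕜) : PQuot 𝕜 Ω ξ :=
  Ideal.Quotient.mk (Ideal.span {Ω - MvPolynomial.C ξ}) f

/-- `P` is the Poisson bracket on `P_{Ω-ξ}` induced from the Jacobian bracket on `A_Ω`. -/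
def IsInducedBracket {𝕜 : Type*} [CommRing 𝕜] (Ω : MvPolynomial (Fin 3) 𝕜) (ξ : 𝕜)
    (P : PoissonStructure 𝕜 (PQuot 𝕜 Ω ξ)) : Prop :=
  ∀ f g : MvPolynomial (Fin 3) 𝕜,
    P.bracket (PQuot.mk Ω ξ f) (PQuot.mk Ω ξ g) = PQuot.mk Ω ξ (jacBracket Ω f g)

open PiTensorProduct in
/-- The Poisson bracket on a finite tensor product `⨂[𝕜] i, A i`. -/
def IsPiTensorBracket {𝕜 : Type*} [CommRing 𝕜] {d : ℕ} {A : Fin d → Type*}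
    [∀ i, CommRing (A i)] [∀ i, Algebra 𝕜 (A i)]
    (P : ∀ i, PoissonStructure 𝕜 (A i))
    (PT : PoissonStructure 𝕜 (⨂[𝕜] i, A i)) : Prop :=
  ∀ a b : (i : Fin d) → A i,
    PT.bracket (⨂ₜ[𝕜] i, a i) (⨂ₜ[𝕜] i, b i) =
      ∑ i : Fin d,
        ⨂ₜ[𝕜] j, Function.update (fun j => a j * b j) i ((P i).bracket (a i) (b i)) j

/-- The Poisson-torus bracket associated to a matrix `Λ` on the Laurent polynomial ring
`𝕜[x₁^{±1},…,xₙ^{±1}]`, realized as the group algebra of `ℤⁿ`: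
`{x^u, x^v} = (Σ_{i,j} uᵢ λᵢⱼ vⱼ) x^{u+v}`. -/
def IsTorusBracket {𝕜 : Type*} [CommRing 𝕜] (n : ℕ) (Λ : Matrix (Fin n) (Fin n) 𝕜)
    (P : PoissonStructure 𝕜 (AddMonoidAlgebra 𝕜 (Fin n → ℤ))) : Prop :=
  ∀ u v : Fin n → ℤ,
    P.bracket (AddMonoidAlgebra.single u (1 : 𝕜)) (AddMonoidAlgebra.single v (1 : 𝕜)) =
      (∑ i, ∑ j, (u i : 𝕜) * Λ i j * (v j : 𝕜)) • AddMonoidAlgebra.single (u + v) (1 : 𝕜)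

/-- `ν : A → ℤ ∪ {∞}` is a `w`-valuation on the Poisson algebra `A`. -/
structure IsWValuation {𝕜 A : Type*} [CommRing 𝕜] [CommRing A] [Algebra 𝕜 A]
    (P : PoissonStructure 𝕜 A) (w : ℤ) (ν : A → WithTop ℤ) : Prop where
  eq_top_iff : ∀ a : A, ν a = ⊤ ↔ a = 0
  scalar : ∀ c : 𝕜, c ≠ 0 → ν (algebraMap 𝕜 A c) = 0
  map_mul : ∀ a b : A, ν (a * b) = ν a + ν b
  map_add : ∀ a b : A, min (ν a) (ν b) ≤ ν (a + b)
  map_bracket : ∀ a b : A, ν a + ν b ≤ ν (P.bracket a b) + (w : WithTop ℤ)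

/-! ### Part 1: a single potential -/

namespace DixTensor

open MvPolynomial

theorem hom_sum {k σ : Type*} [CommRing k] {Ω : MvPolynomial σ k} {n : ℕ}
    (h : Ω.IsHomogeneous n) {s : σ →₀ ℕ} (hs : s ∈ Ω.support) : ∑ i ∈ s.support, s i = n := by
  have := h (mem_support_iff.1 hs)
  rw [← this, Finsupp.weight_apply, Finsupp.sum]
  simp

theorem aeval_mul_hom {k S σ : Type*} [CommRing k] [CommRing S] [Algebra k S]
    {Ω : MvPolynomial σ k} {n : ℕ} (h : Ω.IsHomogeneous n) (t : S) (b : σ → S) :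
    aeval (fun c => t * b c) Ω = t ^ n * aeval b Ω := by
  rw [aeval_def, aeval_def, eval₂_eq, eval₂_eq, Finset.mul_sum]
  refine Finset.sum_congr rfl fun s hs => ?_
  simp_rw [mul_pow]
  rw [Finset.prod_mul_distrib, Finset.prod_pow_eq_pow_sum, hom_sum h hs]
  ring

/-- Degree of a homogeneous polynomial evaluated at polynomials of bounded degree. -/
theorem natDegree_aeval_hom {k S σ : Type*} [CommRing k] [CommRing S] [Algebra k S]
    {Ω : MvPolynomial σ k} {n : ℕ} (h : Ω.IsHomogeneous n) (m : ℕ) (b : σ → Polynomial S)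
    (hb : ∀ c, (b c).natDegree ≤ m) :
    (aeval b Ω).natDegree ≤ n * m := by
  rw [aeval_def, eval₂_eq]
  refine Polynomial.natDegree_sum_le_of_forall_le _ _ fun s hs => ?_
  rw [IsScalarTower.algebraMap_apply k S (Polynomial S), Polynomial.algebraMap_eq]
  refine (Polynomial.natDegree_C_mul_le _ _).trans ?_
  refine (Polynomial.natDegree_prod_le _ _).trans ?_
  rw [← hom_sum h hs, Finset.sum_mul]
  exact Finset.sum_le_sum fun i _ => Polynomial.natDegree_pow_le_of_le _ (hb i)

theorem coeff_prod_pow {S σ : Type*} [CommRing S] (m : ℕ) (b : σ → Polynomial S)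
    (hb : ∀ c, (b c).natDegree ≤ m) (e : σ → ℕ) (T : Finset σ) :
    (∏ i ∈ T, b i ^ e i).coeff ((∑ i ∈ T, e i) * m) = ∏ i ∈ T, (b i).coeff m ^ e i := by
  classical
  induction T using Finset.induction_on with
  | empty => simp
  | insert a T ha ih =>
    rw [Finset.prod_insert ha, Finset.sum_insert ha, Finset.prod_insert ha, add_mul,
      Polynomial.coeff_mul_add_eq_of_natDegree_le (Polynomial.natDegree_pow_le_of_le _ (hb a)), ih,
      Polynomial.coeff_pow_of_natDegree_le (hb a)]
    refine (Polynomial.natDegree_prod_le _ _).trans ?_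
    rw [Finset.sum_mul]
    exact Finset.sum_le_sum fun i _ => Polynomial.natDegree_pow_le_of_le _ (hb i)

theorem coeff_aeval_hom {k S σ : Type*} [CommRing k] [CommRing S] [Algebra k S]
    {Ω : MvPolynomial σ k} {n : ℕ} (h : Ω.IsHomogeneous n) (m : ℕ) (b : σ → Polynomial S)
    (hb : ∀ c, (b c).natDegree ≤ m) :
    (aeval b Ω).coeff (n * m) = aeval (fun c => (b c).coeff m) Ω := by
  rw [aeval_def, eval₂_eq, aeval_def, eval₂_eq, Polynomial.finsetSum_coeff]
  refine Finset.sum_congr rfl fun s hs => ?_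
  rw [IsScalarTower.algebraMap_apply k S (Polynomial S), Polynomial.algebraMap_eq,
    Polynomial.coeff_C_mul, ← hom_sum h hs, coeff_prod_pow m b hb]

theorem crit_zero {k : Type*} [Field k] [Infinite k] {Ω : MvPolynomial (Fin 3) k} {n : ℕ}
    (h : Ω.IsHomogeneous n) (hiso : HasIsolatedSingularity Ω) (b : Fin 3 → k)
    (hb : ∀ c, eval b (pderiv c Ω) = 0) : b = 0 := by
  unfold HasIsolatedSingularity at hiso
  set I := Ideal.span {pderiv (0 : Fin 3) Ω, pderiv 1 Ω, pderiv 2 Ω} with hI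
  have key : ∀ p ∈ I, ∀ t : k, aeval (fun c => t * b c) p = 0 := by
    intro p hp t
    have : I ≤ RingHom.ker (aeval (fun c => t * b c) : MvPolynomial (Fin 3) k →ₐ[k] k) := by
      rw [hI, Ideal.span_le]
      have h2 : ∀ c, aeval (fun c => t * b c) (pderiv c Ω) = 0 := by
        intro c
        rw [aeval_mul_hom h.pderiv]
        change t ^ (n - 1) * eval b (pderiv c Ω) = 0
        rw [hb, mul_zero]
      rintro x (rfl | rfl | rfl) <;> exact h2 _
    exact this hp
  funext c
  by_contra hc
  have hc : b c ≠ 0 := hc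
  have hintegral : IsIntegral k (Ideal.Quotient.mk I (X c)) := Algebra.IsIntegral.isIntegral _
  obtain ⟨g, hg, hg2⟩ := hintegral
  have hmem : Polynomial.aeval (X c : MvPolynomial (Fin 3) k) g ∈ I := by
    rw [← Ideal.Quotient.eq_zero_iff_mem, ← hg2, ← Polynomial.aeval_def]
    exact (Polynomial.aeval_algHom_apply (Ideal.Quotient.mkₐ k I) (X c) g).symm
  have hg0 : g = 0 := by
    apply Polynomial.funext
    intro r
    have := key _ hmem (r / b c)
    rw [← Polynomial.aeval_algHom_apply, aeval_X, div_mul_cancel₀ _ hc] at this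
    simpa [Polynomial.aeval_def, Polynomial.eval₂_eq_eval_map] using this
  exact hg.ne_zero hg0

theorem rad_single {k : Type*} [Field k] [CharZero k] [IsAlgClosed k]
    {Ω : MvPolynomial (Fin 3) k} {n : ℕ}
    (h : Ω.IsHomogeneous n) (hiso : HasIsolatedSingularity Ω) (ξ : k)
    (p : MvPolynomial (Fin 3) k) (hp : ∀ a : Fin 3 → k, eval a Ω = ξ → eval a p = 0) :
    p ∈ Ideal.span {Ω - C ξ} := by
  have hsq : Squarefree (Ω - C ξ) := by
    rintro q ⟨r, hr⟩
    have hd : ∀ c, q ∣ pderiv c Ω := by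
      intro c
      have : pderiv c Ω = pderiv c (Ω - C ξ) := by simp
      rw [this, hr]
      simp only [Derivation.leibniz, smul_eq_mul]
      exact ⟨q * pderiv c r + 2 * r * pderiv c q, by ring⟩
    have hz : ∀ c, (X c : MvPolynomial (Fin 3) k) ∈ (Ideal.span {q}).radical := by
      intro c
      rw [← vanishingIdeal_zeroLocus_eq_radical (K := k)]
      intro x hx
      have hq : eval x q = 0 := hx q (Ideal.subset_span rfl)
      have : x = 0 := crit_zero h hiso x fun c => by
        obtain ⟨s, hs⟩ := hd c
        rw [hs, map_mul, hq, zero_mul]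
      simp [this]
    obtain ⟨N0, h0⟩ := hz 0
    obtain ⟨N1, h1⟩ := hz 1
    rw [Ideal.mem_span_singleton] at h0 h1
    have hrel : IsRelPrime (X 0 : MvPolynomial (Fin 3) k) (X 1) := by
      rw [(X_prime (R := k) (i := (0 : Fin 3))).irreducible.isRelPrime_iff_not_dvd, X_dvd_X]
      decide
    exact (hrel.pow (m := N0) (n := N1)) h0 h1
  have hrad := isRadical_iff_span_singleton.1 hsq.isRadical
  have : p ∈ (Ideal.span {Ω - C ξ}).radical := by
    rw [← vanishingIdeal_zeroLocus_eq_radical (K := k)]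
    intro x hx
    have hx' : eval x (Ω - C ξ) = 0 := hx _ (Ideal.subset_span rfl)
    apply hp
    simpa [sub_eq_zero] using hx'
  exact hrad this

end DixTensor

/-! ### Part 2: points separate the tensor product -/

namespace DixTensor

open MvPolynomial PiTensorProduct

/-- Product of linear functionals. -/
noncomputable def prodFun {k ι : Type*} [Field k] [Fintype ι] {A : ι → Type*}
    [∀ i, AddCommGroup (A i)] [∀ i, Module k (A i)] (φ : ∀ i, A i →ₗ[k] k) :
    (⨂[k] i, A i) →ₗ[k] k :=
  PiTensorProduct.lift ((MultilinearMap.mkPiAlgebra k ι k).compLinearMap φ)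

theorem prodFun_tprod {k ι : Type*} [Field k] [Fintype ι] {A : ι → Type*}
    [∀ i, AddCommGroup (A i)] [∀ i, Module k (A i)] (φ : ∀ i, A i →ₗ[k] k) (x : ∀ i, A i) :
    prodFun φ (tprod k x) = ∏ i, φ i (x i) := by
  simp [prodFun]

theorem contraction {k ι : Type*} [Field k] [Fintype ι] [DecidableEq ι] {A : ι → Type*}
    [∀ i, AddCommGroup (A i)] [∀ i, Module k (A i)] (φ : ∀ i, A i →ₗ[k] k) (a : ι)
    (x : ⨂[k] i, A i) :
    ∃ y : A a, ∀ ψ : A a →ₗ[k] k, prodFun (Function.update φ a ψ) x = ψ y := by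
  induction x using PiTensorProduct.induction_on with
  | smul_tprod r x =>
    refine ⟨(r * ∏ i ∈ Finset.univ.erase a, φ i (x i)) • x a, fun ψ => ?_⟩
    rw [map_smul, prodFun_tprod, ← Finset.mul_prod_erase _ _ (Finset.mem_univ a), map_smul]
    rw [Finset.prod_congr rfl (g := fun i => φ i (x i))]
    · simp; ring
    · intro i hi
      rw [Function.update_of_ne (Finset.ne_of_mem_erase hi)]
  | add x y hx hy =>
    obtain ⟨u, hu⟩ := hx
    obtain ⟨v, hv⟩ := hy
    exact ⟨u + v, fun ψ => by rw [map_add, map_add, hu, hv]⟩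

theorem sep {k ι : Type*} [Field k] [Fintype ι] {A : ι → Type*}
    [∀ i, AddCommGroup (A i)] [∀ i, Module k (A i)] (W : ∀ i, Set (A i →ₗ[k] k))
    (hW : ∀ i x, (∀ φ ∈ W i, φ x = 0) → x = 0) (x : ⨂[k] i, A i)
    (hx : ∀ φ : ∀ i, A i →ₗ[k] k, (∀ i, φ i ∈ W i) → prodFun φ x = 0) : x = 0 := by
  classical
  have claim : ∀ s : Finset ι, ∀ φ : ∀ i, A i →ₗ[k] k, (∀ i ∉ s, φ i ∈ W i) →
      prodFun φ x = 0 := by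
    intro s
    induction s using Finset.induction_on with
    | empty => exact fun φ h => hx φ fun i => h i (by simp)
    | insert a s ha ih =>
      intro φ h
      obtain ⟨y, hy⟩ := contraction φ a x
      have hy0 : y = 0 := by
        refine hW a y fun ψ hψ => ?_
        rw [← hy]
        refine ih _ fun i hi => ?_
        by_cases hia : i = a
        · subst hia; simpa using hψ
        · rw [Function.update_of_ne hia]
          exact h i (by simp [hia, hi])
      have := hy (φ a)
      rwa [Function.update_eq_self, hy0, map_zero] at this
  let b := fun i => Module.Basis.ofVectorSpace k (A i)
  refine (Basis.piTensorProduct b).ext_elem fun p => ?_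
  have h1 : (Basis.piTensorProduct b).coord p = prodFun fun i => (b i).coord (p i) := by
    refine PiTensorProduct.ext (MultilinearMap.ext fun y => ?_)
    simp only [LinearMap.compMultilinearMap_apply, prodFun_tprod]
    simp [Basis.piTensorProduct_repr_tprod_apply]
  have h2 := claim Finset.univ (fun i => (b i).coord (p i)) (by simp)
  rw [← h1] at h2
  simpa using h2

section
variable {k : Type*} [Field k] {d : ℕ}

/-- The polynomial ring in all the variables. -/
abbrev M (d : ℕ) (k : Type*) [CommRing k] := MvPolynomial (Fin d × Fin 3) k

/-- Inclusion of the `l`-th block of variables. -/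
noncomputable def em (d : ℕ) (k : Type*) [Field k] (l : Fin d) :
    MvPolynomial (Fin 3) k →ₐ[k] M d k :=
  rename fun c => (l, c)

@[simp] theorem em_X (l : Fin d) (c : Fin 3) : em d k l (X c) = X (l, c) := by simp [em]

theorem eval_em (l : Fin d) (a : Fin d × Fin 3 → k) (p : MvPolynomial (Fin 3) k) :
    eval a (em d k l p) = eval (fun c => a (l, c)) p := by
  simp [em, eval_rename, Function.comp_def]

/-- The defining ideal. -/
noncomputable def J (Ω : Fin d → MvPolynomial (Fin 3) k) (ξ : Fin d → k) : Ideal (M d k) :=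
  Ideal.span (Set.range fun l => em d k l (Ω l) - C (ξ l))

/-- The points of the tensor product. -/
def V (Ω : Fin d → MvPolynomial (Fin 3) k) (ξ : Fin d → k) : Set (Fin d × Fin 3 → k) :=
  {a | ∀ l, eval (fun c => a (l, c)) (Ω l) = ξ l}

/-- Projection as an algebra map. -/
noncomputable def mkA (Ω : MvPolynomial (Fin 3) k) (ξ : k) :
    MvPolynomial (Fin 3) k →ₐ[k] PQuot k Ω ξ :=
  Ideal.Quotient.mkₐ k (Ideal.span {Ω - C ξ})

theorem mkA_surj (Ω : MvPolynomial (Fin 3) k) (ξ : k) : Function.Surjective (mkA Ω ξ) :=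
  Ideal.Quotient.mk_surjective

theorem mkA_eq (Ω : MvPolynomial (Fin 3) k) (ξ : k) (p) : mkA Ω ξ p = PQuot.mk Ω ξ p := rfl

theorem mkA_eq_zero (Ω : MvPolynomial (Fin 3) k) (ξ : k) (p) :
    mkA Ω ξ p = 0 ↔ p ∈ Ideal.span {Ω - C ξ} := Ideal.Quotient.eq_zero_iff_mem

/-- Lift from `PQuot`. -/
noncomputable def liftA {Ω : MvPolynomial (Fin 3) k} {ξ : k} {S : Type*} [CommRing S] [Algebra k S]
    (g : MvPolynomial (Fin 3) k →ₐ[k] S) (hg : g (Ω - C ξ) = 0) : PQuot k Ω ξ →ₐ[k] S :=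
  Ideal.Quotient.liftₐ (Ideal.span {Ω - C ξ}) g fun a ha => by
    have : Ideal.span {Ω - C ξ} ≤ RingHom.ker g := by
      rw [Ideal.span_le]; rintro x rfl; exact hg
    exact this ha

theorem liftA_mkA {Ω : MvPolynomial (Fin 3) k} {ξ : k} {S : Type*} [CommRing S] [Algebra k S]
    (g : MvPolynomial (Fin 3) k →ₐ[k] S) (hg : g (Ω - C ξ) = 0) (p) :
    liftA g hg (mkA Ω ξ p) = g p := rfl

variable (Ω : Fin d → MvPolynomial (Fin 3) k) (ξ : Fin d → k)

/-- The presentation of the tensor product. -/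
noncomputable def pi : M d k →ₐ[k] ⨂[k] i, PQuot k (Ω i) (ξ i) :=
  aeval fun lc => singleAlgHom lc.1 (mkA (Ω lc.1) (ξ lc.1) (X lc.2))

theorem pi_em (l : Fin d) (p : MvPolynomial (Fin 3) k) :
    pi Ω ξ (em d k l p) = singleAlgHom l (mkA (Ω l) (ξ l) p) := by
  have : (pi Ω ξ).comp (em d k l) = (singleAlgHom l).comp (mkA (Ω l) (ξ l)) := by
    refine MvPolynomial.algHom_ext fun c => ?_
    simp [pi]
  exact DFunLike.congr_fun this p

theorem pi_surj : Function.Surjective (pi Ω ξ) := by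
  rw [← AlgHom.range_eq_top, eq_top_iff]
  rintro x -
  induction x using PiTensorProduct.induction_on with
  | smul_tprod r x =>
    refine Subalgebra.smul_mem _ ?_ _
    have : tprod k x = ∏ i, singleAlgHom (R := k) i (x i) := by
      simp only [singleAlgHom_apply]
      rw [← tprod_prod]
      congr 1
      exact (Finset.univ_prod_mulSingle x).symm
    rw [this]
    refine Subalgebra.prod_mem _ fun i _ => ?_
    obtain ⟨p, hp⟩ := mkA_surj (Ω i) (ξ i) (x i)
    exact ⟨em d k i p, by rw [← hp]; exact pi_em Ω ξ i p⟩
  | add x y hx hy => exact Subalgebra.add_mem _ hx hy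

theorem lift_cond (l : Fin d) :
    ((Ideal.Quotient.mkₐ k (J Ω ξ)).comp (em d k l)) (Ω l - C (ξ l)) = 0 := by
  have : em d k l (Ω l) - C (ξ l) ∈ J Ω ξ := Ideal.subset_span ⟨l, rfl⟩
  rw [← Ideal.Quotient.eq_zero_iff_mem] at this
  simpa [em] using this

/-- Inverse direction. -/
noncomputable def rho : (⨂[k] i, PQuot k (Ω i) (ξ i)) →ₐ[k] (M d k ⧸ J Ω ξ) :=
  PiTensorProduct.liftAlgHom
    ((MultilinearMap.mkPiAlgebra k (Fin d) (M d k ⧸ J Ω ξ)).compLinearMap fun l =>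
      (liftA (Ω := Ω l) (ξ := ξ l) ((Ideal.Quotient.mkₐ k (J Ω ξ)).comp (em d k l)) (lift_cond Ω ξ l)).toLinearMap)
    (by simp) (by intro x y; simp [Finset.prod_mul_distrib])

theorem rho_tprod (x : ∀ i, PQuot k (Ω i) (ξ i)) :
    rho Ω ξ (tprod k x) = ∏ l, liftA (Ω := Ω l) (ξ := ξ l)
      ((Ideal.Quotient.mkₐ k (J Ω ξ)).comp (em d k l)) (lift_cond Ω ξ l) (x l) := by
  unfold rho
  exact PiTensorProduct.lift.tprod _

theorem rho_pi (p : M d k) : rho Ω ξ (pi Ω ξ p) = Ideal.Quotient.mk (J Ω ξ) p := by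
  have : (rho Ω ξ).comp (pi Ω ξ) = Ideal.Quotient.mkₐ k (J Ω ξ) := by
    refine MvPolynomial.algHom_ext fun lc => ?_
    rw [AlgHom.comp_apply, ← Prod.mk.eta (p := lc), ← em_X, pi_em, singleAlgHom_apply, rho_tprod]
    rw [Finset.prod_eq_single lc.1]
    · simp only [MonoidHom.mulSingle_apply, Pi.mulSingle_eq_same, liftA_mkA]
      rfl
    · intro b _ hb
      simp [Pi.mulSingle_eq_of_ne hb]
    · simp
  exact DFunLike.congr_fun this p

theorem pi_eq_zero (p : M d k) : pi Ω ξ p = 0 ↔ p ∈ J Ω ξ := by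
  constructor
  · intro h
    rw [← Ideal.Quotient.eq_zero_iff_mem, ← rho_pi, h, map_zero]
  · intro h
    have : J Ω ξ ≤ RingHom.ker (pi Ω ξ) := by
      rw [J, Ideal.span_le]
      rintro _ ⟨l, rfl⟩
      have h2 : em d k l (Ω l) - C (ξ l) = em d k l (Ω l - C (ξ l)) := by simp [em]
      simp only [SetLike.mem_coe, RingHom.mem_ker]
      rw [h2, pi_em, (mkA_eq_zero _ _ _).2 (Ideal.subset_span rfl), map_zero]
    exact this h

theorem eval_of_mem_J {p : M d k} (hp : p ∈ J Ω ξ) {a} (ha : a ∈ V Ω ξ) : eval a p = 0 := by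
  have : J Ω ξ ≤ RingHom.ker (eval a) := by
    rw [J, Ideal.span_le]
    rintro _ ⟨l, rfl⟩
    simp [eval_em, ha l]
  exact this hp

theorem mem_J_of_eval [CharZero k] [IsAlgClosed k] (n : Fin d → ℕ)
    (hhom : ∀ i, (Ω i).IsHomogeneous (n i)) (hiso : ∀ i, HasIsolatedSingularity (Ω i))
    {p : M d k} (hp : ∀ a ∈ V Ω ξ, eval a p = 0) : p ∈ J Ω ξ := by
  rw [← pi_eq_zero]
  refine sep (fun i => {φ | ∃ (a : Fin 3 → k) (h : (aeval a : _ →ₐ[k] k) (Ω i - C (ξ i)) = 0),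
    φ = (liftA (aeval a) h).toLinearMap}) ?_ _ ?_
  · intro i x hx
    obtain ⟨q, rfl⟩ := mkA_surj _ _ x
    rw [mkA_eq_zero]
    refine rad_single (hhom i) (hiso i) _ _ fun a ha => ?_
    exact hx _ ⟨a, by simp [aeval_eq_eval, ha], rfl⟩
  · intro φ hφ
    choose a ha hφ using hφ
    have h1 : ∀ q, prodFun φ (pi Ω ξ q) = aeval (fun lc => a lc.1 lc.2) q := by
      let Φ : (⨂[k] i, PQuot k (Ω i) (ξ i)) →ₐ[k] k := PiTensorProduct.liftAlgHom
        ((MultilinearMap.mkPiAlgebra k (Fin d) k).compLinearMap φ) (by simp [hφ])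
          (by intro x y; simp [hφ, Finset.prod_mul_distrib])
      have h2 : Φ.comp (pi Ω ξ) = aeval (fun lc => a lc.1 lc.2) := by
        refine MvPolynomial.algHom_ext fun lc => ?_
        rw [AlgHom.comp_apply, ← Prod.mk.eta (p := lc), ← em_X, pi_em, singleAlgHom_apply]
        simp only [Φ, liftAlgHom_apply]
        simp only [MultilinearMap.compLinearMap_apply, lift.tprod,
          MultilinearMap.mkPiAlgebra_apply]
        rw [Finset.prod_eq_single lc.1]
        · rw [hφ]
          simp only [MonoidHom.mulSingle_apply, Pi.mulSingle_eq_same, AlgHom.toLinearMap_apply,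
            liftA_mkA]
          simp
        · intro b _ hb
          simp [Pi.mulSingle_eq_of_ne hb, hφ]
        · simp
      intro q
      exact DFunLike.congr_fun h2 q
    rw [h1]
    refine hp _ fun l => ?_
    have := ha l
    rw [map_sub, sub_eq_zero, algHom_C] at this
    exact this

end

end DixTensor

/-! ### Part 3: the partial degree filtrations -/

namespace DixTensor

open MvPolynomial

section
variable {k : Type*} [Field k] {d : ℕ}

/-- Scaling of the `j`-th block of variables. -/
noncomputable def th (j : Fin d) : M d k →ₐ[k] Polynomial (M d k) :=
  aeval fun lc => if lc.1 = j then Polynomial.X * Polynomial.C (X lc) else Polynomial.C (X lc)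

/-- Component of degree `m` in the `j`-th block of variables. -/
noncomputable def co (j : Fin d) (m : ℕ) (p : M d k) : M d k := (th j p).coeff m

variable (j : Fin d)

theorem co_add (m : ℕ) (p q : M d k) : co j m (p + q) = co j m p + co j m q := by simp [co]

theorem th_C (r : k) : th j (C r : M d k) = Polynomial.C (C r) := by
  simp only [th, algHom_C]; rfl

theorem co_mul_X_ne (m : ℕ) (p : M d k) (i : Fin d × Fin 3) (hi : i.1 ≠ j) :
    co j m (p * X i) = co j m p * X i := by
  have : th j (X i : M d k) = Polynomial.C (X i) := by simp [th, hi]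
  simp [co, map_mul, this]

theorem co_mul_X_zero (p : M d k) (i : Fin d × Fin 3) (hi : i.1 = j) :
    co j 0 (p * X i) = 0 := by
  have : th j (X i : M d k) = Polynomial.X * Polynomial.C (X i) := by simp [th, hi]
  simp [co, map_mul, this]

theorem co_mul_X_succ (m : ℕ) (p : M d k) (i : Fin d × Fin 3) (hi : i.1 = j) :
    co j (m + 1) (p * X i) = co j m p * X i := by
  have : th j (X i : M d k) = Polynomial.X * Polynomial.C (X i) := by simp [th, hi]
  rw [co, map_mul, this, ← mul_assoc, Polynomial.coeff_mul_C, Polynomial.coeff_mul_X, co]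

theorem co_C (m : ℕ) (r : k) : co j m (C r : M d k) = if m = 0 then C r else 0 := by
  rw [co, th_C, Polynomial.coeff_C]

theorem eval_th (p : M d k) : (th j p).eval 1 = p := by
  induction p using MvPolynomial.induction_on with
  | C r => simp
  | add p q hp hq => simp [hp, hq]
  | mul_X p i hp =>
    rw [map_mul, Polynomial.eval_mul, hp]
    congr 1
    by_cases hi : i.1 = j <;> simp [th, hi]

theorem th_co (m : ℕ) (p : M d k) :
    th j (co j m p) = Polynomial.X ^ m * Polynomial.C (co j m p) := by
  induction p using MvPolynomial.induction_on generalizing m with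
  | C r =>
    rw [co_C]
    split_ifs with h
    · simp [h]
    · simp
  | add p q hp hq => rw [co_add, map_add, hp, hq, map_add, mul_add]
  | mul_X p i hp =>
    by_cases hi : i.1 = j
    · cases m with
      | zero => simp [co_mul_X_zero j p i hi]
      | succ m =>
        rw [co_mul_X_succ j m p i hi, map_mul, hp]
        have : th j (X i : M d k) = Polynomial.X * Polynomial.C (X i) := by simp [th, hi]
        rw [this, map_mul]; ring
    · rw [co_mul_X_ne j m p i hi, map_mul, hp]
      have : th j (X i : M d k) = Polynomial.C (X i) := by simp [th, hi]
      rw [this, map_mul]; ring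

theorem co_co (m : ℕ) (p : M d k) : co j m (co j m p) = co j m p := by
  rw [co, th_co]; simp

theorem euler_co (m : ℕ) (p : M d k) :
    ∑ c : Fin 3, X (j, c) * pderiv (j, c) (co j m p) = m • co j m p := by
  have key : ∀ i : Fin d × Fin 3, ∑ c : Fin 3, X (j, c) * pderiv (j, c) (X i : M d k)
      = if i.1 = j then X i else 0 := by
    rintro ⟨l, c⟩
    simp only [pderiv_X, Pi.single_apply, Prod.mk.injEq]
    by_cases h : l = j
    · simp [h]
    · simp [h]
  induction p using MvPolynomial.induction_on generalizing m with
  | C r =>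
    rw [co_C]
    split_ifs with h
    · simp [h]
    · simp
  | add p q hp hq =>
    simp only [co_add, map_add, mul_add, Finset.sum_add_distrib, hp, hq, smul_add]
  | mul_X p i hp =>
    have hstep : ∀ r : M d k, ∑ c : Fin 3, X (j, c) * pderiv (j, c) (r * X i) =
        r * (if i.1 = j then X i else 0) + X i * ∑ c : Fin 3, X (j, c) * pderiv (j, c) r := by
      intro r
      rw [← key, Finset.mul_sum, Finset.mul_sum, ← Finset.sum_add_distrib]
      refine Finset.sum_congr rfl fun c _ => ?_
      rw [Derivation.leibniz, smul_eq_mul, smul_eq_mul]; ring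
    by_cases hi : i.1 = j
    · cases m with
      | zero => simp [co_mul_X_zero j p i hi]
      | succ m =>
        rw [co_mul_X_succ j m p i hi, hstep, hp, if_pos hi]
        simp only [nsmul_eq_mul]; push_cast; ring
    · rw [co_mul_X_ne j m p i hi, hstep, hp, if_neg hi]
      simp only [nsmul_eq_mul]; ring

theorem pderiv_co_zero (c : Fin 3) (p : M d k) : pderiv (j, c) (co j 0 p) = 0 := by
  induction p using MvPolynomial.induction_on with
  | C r => simp [co_C]
  | add p q hp hq => rw [co_add, map_add, hp, hq, add_zero]
  | mul_X p i hp =>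
    by_cases hi : i.1 = j
    · simp [co_mul_X_zero j p i hi]
    · rw [co_mul_X_ne j 0 p i hi, Derivation.leibniz, hp, pderiv_X,
        Pi.single_eq_of_ne (by rintro rfl; exact hi rfl)]
      simp

theorem co_pderiv (c : Fin 3) (m : ℕ) (p : M d k) :
    co j m (pderiv (j, c) p) = pderiv (j, c) (co j (m + 1) p) := by
  induction p using MvPolynomial.induction_on generalizing m with
  | C r => simp [co]
  | add p q hp hq => rw [co_add, map_add, map_add, co_add, hp, hq]
  | mul_X p i hp =>
    by_cases hi : i.1 = j
    · rw [Derivation.leibniz, smul_eq_mul, smul_eq_mul, co_add, co_mul_X_succ j m p i hi,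
        Derivation.leibniz, smul_eq_mul, smul_eq_mul, mul_comm (X i) (pderiv _ p)]
      have h1 : co j m (p * pderiv (j, c) (X i)) = co j m p * pderiv (j, c) (X i) := by
        rw [pderiv_X, Pi.single_apply]
        split_ifs <;> simp [co]
      rw [h1]
      cases m with
      | zero => rw [co_mul_X_zero j _ i hi, pderiv_co_zero]; simp
      | succ m => rw [co_mul_X_succ j m _ i hi, hp]; ring
    · rw [Derivation.leibniz, smul_eq_mul, smul_eq_mul, co_add, co_mul_X_ne j (m + 1) p i hi,
        Derivation.leibniz, smul_eq_mul, smul_eq_mul, mul_comm (X i) (pderiv _ p),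
        co_mul_X_ne j m _ i hi, hp, pderiv_X, Pi.single_eq_of_ne (by rintro rfl; exact hi rfl)]
      simp [co]; ring

theorem co_pderiv_ne (l : Fin d) (hl : l ≠ j) (c : Fin 3) (m : ℕ) (p : M d k) :
    co j m (pderiv (l, c) p) = pderiv (l, c) (co j m p) := by
  induction p using MvPolynomial.induction_on generalizing m with
  | C r =>
    rw [co_C]
    split_ifs <;> simp [co]
  | add p q hp hq => rw [co_add, map_add, map_add, co_add, hp, hq]
  | mul_X p i hp =>
    rw [Derivation.leibniz, smul_eq_mul, smul_eq_mul, co_add, mul_comm (X i) (pderiv _ p)]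
    have h1 : co j m (p * pderiv (l, c) (X i)) = co j m p * pderiv (l, c) (X i) := by
      rw [pderiv_X, Pi.single_apply]
      split_ifs <;> simp [co]
    rw [h1]
    by_cases hi : i.1 = j
    · rw [pderiv_X, Pi.single_eq_of_ne (by rintro rfl; exact hl hi)]
      cases m with
      | zero => rw [co_mul_X_zero j _ i hi, co_mul_X_zero j _ i hi]; simp
      | succ m =>
        rw [co_mul_X_succ j m _ i hi, co_mul_X_succ j m _ i hi, hp, Derivation.leibniz,
          smul_eq_mul, smul_eq_mul, pderiv_X,
          Pi.single_eq_of_ne (by rintro rfl; exact hl hi)]; ring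
    · rw [co_mul_X_ne j m _ i hi, co_mul_X_ne j m _ i hi, hp, Derivation.leibniz]
      simp only [smul_eq_mul]; ring

theorem natDegree_th_pderiv (c : Fin 3) {m : ℕ} {p : M d k} (h : (th j p).natDegree ≤ m) :
    (th j (pderiv (j, c) p)).natDegree ≤ m - 1 := by
  rw [Polynomial.natDegree_le_iff_coeff_eq_zero] at h ⊢
  intro N hN
  have := co_pderiv j c N p
  rw [co, co, h (N + 1) (by omega), map_zero] at this
  exact this

theorem natDegree_th_pderiv_ne (l : Fin d) (hl : l ≠ j) (c : Fin 3) {m : ℕ} {p : M d k}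
    (h : (th j p).natDegree ≤ m) : (th j (pderiv (l, c) p)).natDegree ≤ m := by
  rw [Polynomial.natDegree_le_iff_coeff_eq_zero] at h ⊢
  intro N hN
  have := co_pderiv_ne j l hl c N p
  rw [co, co, h N hN, map_zero] at this
  exact this

theorem th_em_ne (l : Fin d) (hl : l ≠ j) (p : MvPolynomial (Fin 3) k) :
    th j (em d k l p) = Polynomial.C (em d k l p) := by
  induction p using MvPolynomial.induction_on with
  | C r => simp [em]
  | add p q hp hq => simp [hp, hq]
  | mul_X p i hp =>
    rw [map_mul, map_mul, hp, em_X, map_mul]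
    congr 1
    simp [th, hl]

theorem th_em {Ω : MvPolynomial (Fin 3) k} {n : ℕ} (h : Ω.IsHomogeneous n) :
    th j (em d k j Ω) = Polynomial.X ^ n * Polynomial.C (em d k j Ω) := by
  have h1 : (th j).comp (em d k j) =
      aeval (fun c => Polynomial.X * Polynomial.C (X (j, c) : M d k)) := by
    refine MvPolynomial.algHom_ext fun c => ?_
    simp [th]
  have h2 : (Polynomial.CAlgHom (R := k) (A := M d k)).comp (em d k j) =
      aeval (fun c => Polynomial.C (X (j, c) : M d k)) := by
    refine MvPolynomial.algHom_ext fun c => ?_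
    simp
  have h3 := DFunLike.congr_fun h1 Ω
  rw [aeval_mul_hom h, ← h2] at h3
  exact h3

theorem natDegree_th_em {Ω : MvPolynomial (Fin 3) k} {n : ℕ} (h : Ω.IsHomogeneous n) :
    (th j (em d k j Ω)).natDegree ≤ n := by
  rw [th_em j h]
  exact (Polynomial.natDegree_mul_C_le _ _).trans (Polynomial.natDegree_X_pow_le _)

/-- Freeze all variables outside block `j`. -/
noncomputable def fr (a : Fin d × Fin 3 → k) : M d k →ₐ[k] MvPolynomial (Fin 3) k :=
  aeval fun lc => if lc.1 = j then X lc.2 else C (a lc)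

/-- Scaling in three variables. -/
noncomputable def th1 : MvPolynomial (Fin 3) k →ₐ[k] Polynomial (MvPolynomial (Fin 3) k) :=
  aeval fun c => Polynomial.X * Polynomial.C (X c)

theorem th1_fr (a : Fin d × Fin 3 → k) (p : M d k) :
    th1 (fr j a p) = (th j p).map (fr j a).toRingHom := by
  have : th1.comp (fr j a) = (Polynomial.mapAlgHom (fr j a)).comp (th j) := by
    refine MvPolynomial.algHom_ext fun lc => ?_
    by_cases h : lc.1 = j
    · simp [fr, th, th1, h]
    · simp only [fr, th, h, th1, AlgHom.comp_apply, aeval_X, if_false, algHom_C]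
      simp [Polynomial.mapAlgHom, h]
  exact DFunLike.congr_fun this p

variable {Ω : Fin d → MvPolynomial (Fin 3) k} {ξ : Fin d → k} {n : Fin d → ℕ}

theorem potential_ne_zero [Infinite k] {Ω : MvPolynomial (Fin 3) k} {n : ℕ}
    (h : Ω.IsHomogeneous n) (hiso : HasIsolatedSingularity Ω) : Ω ≠ 0 := by
  rintro rfl
  have := congrFun (crit_zero h hiso 1 (by simp)) 0
  simp at this

theorem fr_em_ne (a : Fin d × Fin 3 → k) (l : Fin d) (hl : l ≠ j) (p : MvPolynomial (Fin 3) k) :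
    fr j a (em d k l p) = C (eval (fun c => a (l, c)) p) := by
  induction p using MvPolynomial.induction_on with
  | C r => simp [em, fr, algHom_C]
  | add p q hp hq => simp [hp, hq]
  | mul_X p i hp =>
    rw [map_mul, map_mul, hp, em_X, map_mul, map_mul]
    congr 1
    simp [fr, hl]

theorem fr_em (a : Fin d × Fin 3 → k) (p : MvPolynomial (Fin 3) k) :
    fr j a (em d k j p) = p := by
  have : (fr j a).comp (em d k j) = AlgHom.id k _ := by
    refine MvPolynomial.algHom_ext fun c => ?_
    simp [fr]
  exact DFunLike.congr_fun this p

theorem eval_fr (a : Fin d × Fin 3 → k) (p : M d k) :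
    eval (fun c => a (j, c)) (fr j a p) = eval a p := by
  induction p using MvPolynomial.induction_on with
  | C r => simp [fr, algHom_C]
  | add p q hp hq => simp [hp, hq]
  | mul_X p i hp =>
    rw [map_mul, map_mul, hp, map_mul]
    congr 1
    by_cases h : i.1 = j
    · subst h; simp [fr]
    · simp [fr, h]

theorem top_mem [CharZero k] [IsAlgClosed k]
    (hhom : ∀ i, (Ω i).IsHomogeneous (n i)) (hiso : ∀ i, HasIsolatedSingularity (Ω i))
    (hn : 1 ≤ n j) {p : M d k} (hp : p ∈ J Ω ξ) {m : ℕ} (hm : (th j p).natDegree ≤ m) :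
    co j m p ∈ J Ω (Function.update ξ j 0) := by
  refine mem_J_of_eval _ _ n hhom hiso fun a ha => ?_
  have haj : eval (fun c => a (j, c)) (Ω j) = 0 := by simpa using ha j
  have hfr : fr j a p ∈ Ideal.span {Ω j - C (ξ j)} := by
    have : J Ω ξ ≤ (Ideal.span {Ω j - C (ξ j)}).comap (fr j a) := by
      rw [J, Ideal.span_le]
      rintro _ ⟨l, rfl⟩
      simp only [SetLike.mem_coe, Ideal.mem_comap]
      rw [map_sub, algHom_C]
      by_cases hl : l = j
      · subst hl
        rw [fr_em]
        exact Ideal.subset_span rfl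
      · rw [fr_em_ne j a l hl, ha l, Function.update_of_ne hl]
        simp
    exact this hp
  rw [Ideal.mem_span_singleton] at hfr
  obtain ⟨q, hq⟩ := hfr
  have h0 : Ω j ≠ 0 := potential_ne_zero (hhom j) (hiso j)
  set F : Polynomial (MvPolynomial (Fin 3) k) :=
    Polynomial.X ^ (n j) * Polynomial.C (Ω j) - Polynomial.C (C (ξ j)) with hF
  have hthΩ : th1 (Ω j - C (ξ j)) = F := by
    rw [map_sub, hF, algHom_C, th1, aeval_mul_hom (hhom j)]
    have h2 : (Polynomial.CAlgHom (R := k) (A := MvPolynomial (Fin 3) k)) =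
        aeval (fun c => Polynomial.C (X c : MvPolynomial (Fin 3) k)) := by
      refine MvPolynomial.algHom_ext fun c => ?_
      simp
    rw [← h2]
    rfl
  have hFd : F.natDegree = n j := by
    rw [hF, Polynomial.natDegree_sub_C, mul_comm, Polynomial.natDegree_C_mul_X_pow _ _ h0]
  have hFl : F.coeff (n j) = Ω j := by
    rw [hF, Polynomial.coeff_sub, Polynomial.coeff_mul_C, Polynomial.coeff_X_pow,
      Polynomial.coeff_C]
    simp [show n j ≠ 0 by omega]
  have hF0 : F ≠ 0 := by
    intro h
    rw [h] at hFl
    exact h0 (by simpa using hFl.symm)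
  have hprod : (th j p).map (fr j a).toRingHom = F * th1 q := by
    rw [← th1_fr, hq, map_mul, hthΩ]
  have hc : fr j a (co j m p) = (F * th1 q).coeff m := by
    rw [← hprod, Polynomial.coeff_map]; rfl
  rw [← eval_fr j, hc]
  by_cases hG : th1 q = 0
  · simp [hG]
  have hdeg : n j + (th1 q).natDegree ≤ m := by
    rw [← hFd, ← Polynomial.natDegree_mul hF0 hG, ← hprod]
    exact Polynomial.natDegree_map_le.trans hm
  rcases hdeg.lt_or_eq with h | h
  · rw [Polynomial.coeff_eq_zero_of_natDegree_lt, map_zero]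
    rwa [Polynomial.natDegree_mul hF0 hG, hFd]
  · rw [← h, Polynomial.coeff_mul_add_eq_of_natDegree_le hFd.le le_rfl, hFl, map_mul, haj, zero_mul]

theorem lower (hhom : ∀ i, (Ω i).IsHomogeneous (n i)) (hn : 1 ≤ n j) {p : M d k} {m : ℕ}
    (hm : (th j p).natDegree ≤ m + 1)
    (hp : co j (m + 1) p ∈ J Ω (Function.update ξ j 0)) :
    ∃ p', p - p' ∈ J Ω ξ ∧ (th j p').natDegree ≤ m := by
  set u := co j (m + 1) p with hu
  obtain ⟨q, hq⟩ := Ideal.mem_span_range_iff_exists_fun.1 hp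
  have key : ∀ l, ∃ e ∈ J Ω ξ, (th j (co j (m + 1)
      (q l * (em d k l (Ω l) - C (Function.update ξ j 0 l))) - e)).natDegree ≤ m := by
    intro l
    have hgen : em d k l (Ω l) - C (ξ l) ∈ J Ω ξ := Ideal.subset_span ⟨l, rfl⟩
    by_cases hl : l = j
    · subst hl
      simp only [Function.update_self, C_0, sub_zero]
      have h1 : co l (m + 1) (q l * em d k l (Ω l)) =
          if n l ≤ m + 1 then co l (m + 1 - n l) (q l) * em d k l (Ω l) else 0 := by
        rw [co, map_mul, th_em l (hhom l), ← mul_assoc, Polynomial.coeff_mul_C,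
          Polynomial.coeff_mul_X_pow']
        split_ifs <;> simp [co]
      rw [h1]
      split_ifs with h
      · refine ⟨_, Ideal.mul_mem_left _ (co l (m + 1 - n l) (q l)) hgen, ?_⟩
        rw [show ∀ x y z : M d k, x * y - x * (y - z) = x * z by intros; ring, map_mul, th_co,
          th_C, mul_assoc, ← map_mul]
        refine (Polynomial.natDegree_mul_C_le _ _).trans ((Polynomial.natDegree_X_pow_le _).trans ?_)
        omega
      · exact ⟨0, Ideal.zero_mem _, by simp⟩
    · rw [Function.update_of_ne hl]
      refine ⟨_, Ideal.mul_mem_left _ (co j (m + 1) (q l)) hgen, ?_⟩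
      have h1 : co j (m + 1) (q l * (em d k l (Ω l) - C (ξ l))) =
          co j (m + 1) (q l) * (em d k l (Ω l) - C (ξ l)) := by
        rw [co, map_mul, map_sub, th_em_ne j l hl, th_C, ← map_sub, Polynomial.coeff_mul_C, co]
      rw [h1, sub_self]
      simp
  choose e he hed using key
  refine ⟨p - ∑ l, e l, by simpa using Ideal.sum_mem _ fun l _ => he l, ?_⟩
  have hsum : u = ∑ l, co j (m + 1) (q l * (em d k l (Ω l) - C (Function.update ξ j 0 l))) := by
    have h1 : u = co j (m + 1) u := (co_co j (m + 1) p).symm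
    rw [h1, ← hq]
    simp only [co, map_sum, Polynomial.finsetSum_coeff]
  have heq : p - ∑ l, e l = (p - u) + ∑ l, (co j (m + 1)
      (q l * (em d k l (Ω l) - C (Function.update ξ j 0 l))) - e l) := by
    rw [Finset.sum_sub_distrib, ← hsum]; ring
  rw [heq, map_add, map_sum]
  refine (Polynomial.natDegree_add_le_of_degree_le ?_
    (Polynomial.natDegree_sum_le_of_forall_le _ _ fun l _ => hed l))
  rw [map_sub, hu, th_co, Polynomial.natDegree_le_iff_coeff_eq_zero]
  intro N hN
  rw [Polynomial.coeff_sub, Polynomial.coeff_mul_C, Polynomial.coeff_X_pow]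
  by_cases h : N = m + 1
  · subst h; simp [co]
  · rw [if_neg h, Polynomial.coeff_eq_zero_of_natDegree_lt (by omega)]; simp

end

end DixTensor

/-! ### Part 4: the bracket on polynomials -/

namespace DixTensor

open MvPolynomial PiTensorProduct

/-- `D` is a derivation along `φ`. -/
structure IsDer {σ k S : Type*} [CommRing k] [CommRing S] [Algebra k S]
    (φ : MvPolynomial σ k →ₐ[k] S) (D : MvPolynomial σ k → S) : Prop where
  const : ∀ r, D (C r) = 0
  add : ∀ p q, D (p + q) = D p + D q
  mul : ∀ p q, D (p * q) = D p * φ q + φ p * D q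

theorem IsDer.ext {σ k S : Type*} [CommRing k] [CommRing S] [Algebra k S]
    {φ : MvPolynomial σ k →ₐ[k] S} {D D' : MvPolynomial σ k → S} (h : IsDer φ D) (h' : IsDer φ D')
    (hX : ∀ i, D (X i) = D' (X i)) (p) : D p = D' p := by
  induction p using MvPolynomial.induction_on with
  | C r => rw [h.const, h'.const]
  | add p q hp hq => rw [h.add, h'.add, hp, hq]
  | mul_X p i hp => rw [h.mul, h'.mul, hp, hX]

section
variable {𝕜 A : Type*} [CommRing 𝕜] [CommRing A] [Algebra 𝕜 A] (P : PoissonStructure 𝕜 A)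

theorem bracket_add_right (a b c : A) : P.bracket a (b + c) = P.bracket a b + P.bracket a c := by
  rw [P.antisymm, P.add_left, P.antisymm b, P.antisymm c]; ring

theorem bracket_smul_right (r : 𝕜) (a b : A) : P.bracket a (r • b) = r • P.bracket a b := by
  rw [P.antisymm, P.smul_left, P.antisymm b, smul_neg, neg_neg]

theorem bracket_mul_left (a b c : A) :
    P.bracket (a * b) c = P.bracket a c * b + a * P.bracket b c := by
  rw [P.antisymm, P.leibniz, P.antisymm c a, P.antisymm c b]; ring

theorem bracket_one_right (a : A) : P.bracket a 1 = 0 := by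
  have := P.leibniz a 1 1
  simpa using this

theorem bracket_one_left (a : A) : P.bracket 1 a = 0 := by
  rw [P.antisymm, bracket_one_right, neg_zero]

theorem bracket_algebraMap_right (a : A) (r : 𝕜) : P.bracket a (algebraMap 𝕜 A r) = 0 := by
  rw [Algebra.algebraMap_eq_smul_one, bracket_smul_right, bracket_one_right, smul_zero]

theorem bracket_algebraMap_left (a : A) (r : 𝕜) : P.bracket (algebraMap 𝕜 A r) a = 0 := by
  rw [P.antisymm, bracket_algebraMap_right, neg_zero]

end

section
variable {k : Type*} [Field k] {d : ℕ}
variable (Ω : Fin d → MvPolynomial (Fin 3) k) (ξ : Fin d → k)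

/-- The bracket on the big polynomial ring. -/
noncomputable def br (p q : M d k) : M d k :=
  ∑ l, ∑ c, ∑ c', pderiv (l, c) p * pderiv (l, c') q * em d k l (jacBracket (Ω l) (X c) (X c'))

theorem br_X_right (p : M d k) (l : Fin d) (c' : Fin 3) :
    br Ω p (X (l, c')) =
      ∑ c, pderiv (l, c) p * em d k l (jacBracket (Ω l) (X c) (X c')) := by
  unfold br
  rw [Finset.sum_eq_single l]
  · refine Finset.sum_congr rfl fun c _ => ?_
    rw [Finset.sum_eq_single c']
    · simp
    · intro b _ hb
      rw [pderiv_X, Pi.single_eq_of_ne (by simp [hb.symm])]; simp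
    · simp
  · intro b _ hb
    refine Finset.sum_eq_zero fun c _ => Finset.sum_eq_zero fun c'' _ => ?_
    rw [pderiv_X, Pi.single_eq_of_ne (by simp [hb.symm])]; simp
  · simp

theorem br_X_X (l : Fin d) (c c' : Fin 3) :
    br Ω (X (l, c)) (X (l, c')) = em d k l (jacBracket (Ω l) (X c) (X c')) := by
  rw [br_X_right, Finset.sum_eq_single c]
  · simp
  · intro b _ hb
    rw [pderiv_X, Pi.single_eq_of_ne (by simp [hb.symm])]; simp
  · simp

theorem br_X_X_ne (l l' : Fin d) (h : l ≠ l') (c c' : Fin 3) :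
    br Ω (X (l, c)) (X (l', c')) = 0 := by
  rw [br_X_right]
  refine Finset.sum_eq_zero fun b _ => ?_
  rw [pderiv_X, Pi.single_eq_of_ne (by simp [h])]; simp

variable {Ω ξ}
variable {P : ∀ i, PoissonStructure k (PQuot k (Ω i) (ξ i))}
    {PT : PoissonStructure k (⨂[k] i, PQuot k (Ω i) (ξ i))}

theorem bracket_single (hPT : IsPiTensorBracket P PT) (l l' : Fin d) (x : PQuot k (Ω l) (ξ l)) (y : PQuot k (Ω l') (ξ l'))
    (h : l ≠ l') : PT.bracket (singleAlgHom l x) (singleAlgHom l' y) = 0 := by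
  rw [singleAlgHom_apply, singleAlgHom_apply, hPT]
  refine Finset.sum_eq_zero fun i _ => ?_
  refine MultilinearMap.map_coord_zero _ i ?_
  rw [Function.update_self]
  by_cases hi : i = l
  · have : i ≠ l' := by rintro rfl; exact h hi.symm
    rw [MonoidHom.mulSingle_apply l', Pi.mulSingle_eq_of_ne this, bracket_one_right]
  · rw [MonoidHom.mulSingle_apply l, Pi.mulSingle_eq_of_ne hi, bracket_one_left]

theorem bracket_single_same (hPT : IsPiTensorBracket P PT) (l : Fin d) (x y : PQuot k (Ω l) (ξ l)) :
    PT.bracket (singleAlgHom l x) (singleAlgHom l y) = singleAlgHom l ((P l).bracket x y) := by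
  rw [singleAlgHom_apply, singleAlgHom_apply, hPT, singleAlgHom_apply]
  rw [Finset.sum_eq_single l]
  · congr 1
    funext j
    by_cases hj : j = l
    · subst hj; simp
    · simp [Function.update_of_ne hj, Pi.mulSingle_eq_of_ne hj]
  · intro i _ hi
    refine MultilinearMap.map_coord_zero _ i ?_
    rw [Function.update_self, MonoidHom.mulSingle_apply, Pi.mulSingle_eq_of_ne hi,
      bracket_one_left]
  · simp

theorem bracket_pi (hP : ∀ i, IsInducedBracket (Ω i) (ξ i) (P i))
    (hPT : IsPiTensorBracket P PT) (p q : M d k) :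
    PT.bracket (pi Ω ξ p) (pi Ω ξ q) = pi Ω ξ (br Ω p q) := by
  have hX : ∀ i i', PT.bracket (pi Ω ξ (X i)) (pi Ω ξ (X i')) = pi Ω ξ (br Ω (X i) (X i')) := by
    rintro ⟨l, c⟩ ⟨l', c'⟩
    rw [← em_X, ← em_X, pi_em, pi_em]
    by_cases h : l = l'
    · subst h
      rw [bracket_single_same hPT, em_X, em_X, br_X_X, pi_em, mkA_eq, mkA_eq, hP, mkA_eq]
    · rw [bracket_single hPT _ _ _ _ h, em_X, em_X, br_X_X_ne _ _ _ h, map_zero]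
  have hr : ∀ q, IsDer (pi Ω ξ) fun p => PT.bracket (pi Ω ξ p) (pi Ω ξ q) := fun q =>
    { const := fun r => by rw [algHom_C]; exact bracket_algebraMap_left _ _ _
      add := fun p p' => by rw [map_add, PT.add_left]
      mul := fun p p' => by rw [map_mul, bracket_mul_left] }
  have hl : ∀ p, IsDer (pi Ω ξ) fun q => PT.bracket (pi Ω ξ p) (pi Ω ξ q) := fun p =>
    { const := fun r => by rw [algHom_C]; exact bracket_algebraMap_right _ _ _
      add := fun q q' => by rw [map_add, bracket_add_right]
      mul := fun q q' => by rw [map_mul, PT.leibniz] }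
  have hr' : ∀ q, IsDer (pi Ω ξ) fun p => pi Ω ξ (br Ω p q) := fun q =>
    { const := fun r => by simp [br]
      add := fun p p' => by
        rw [← map_add]; congr 1
        simp only [br, map_add, add_mul, Finset.sum_add_distrib]
      mul := fun p p' => by
        rw [← map_mul, ← map_mul, ← map_add]; congr 1
        simp only [br, Finset.sum_mul, Finset.mul_sum, ← Finset.sum_add_distrib]
        refine Finset.sum_congr rfl fun l _ => Finset.sum_congr rfl fun c _ =>
          Finset.sum_congr rfl fun c' _ => ?_
        rw [Derivation.leibniz, smul_eq_mul, smul_eq_mul]; ring }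
  have hl' : ∀ p, IsDer (pi Ω ξ) fun q => pi Ω ξ (br Ω p q) := fun p =>
    { const := fun r => by simp [br]
      add := fun q q' => by
        rw [← map_add]; congr 1
        simp only [br, map_add, mul_add, add_mul, Finset.sum_add_distrib]
      mul := fun q q' => by
        rw [← map_mul, ← map_mul, ← map_add]; congr 1
        simp only [br, Finset.sum_mul, Finset.mul_sum, ← Finset.sum_add_distrib]
        refine Finset.sum_congr rfl fun l _ => Finset.sum_congr rfl fun c _ =>
          Finset.sum_congr rfl fun c' _ => ?_
        rw [Derivation.leibniz, smul_eq_mul, smul_eq_mul]; ring }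
  exact (hr q).ext (hr' q) (fun i => (hl (X i)).ext (hl' (X i)) (fun i' => hX i i') q) p

end

end DixTensor

/-! ### Part 5: the main argument -/

namespace DixTensor

open MvPolynomial PiTensorProduct

section
variable {k : Type*} [Field k] {d : ℕ}

theorem jac01 (Ω : MvPolynomial (Fin 3) k) : jacBracket Ω (X 0) (X 1) = pderiv 2 Ω := by
  simp [jacBracket, Matrix.det_fin_three, pderiv_X]

theorem jac12 (Ω : MvPolynomial (Fin 3) k) : jacBracket Ω (X 1) (X 2) = pderiv 0 Ω := by
  simp [jacBracket, Matrix.det_fin_three, pderiv_X]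

theorem jac20 (Ω : MvPolynomial (Fin 3) k) : jacBracket Ω (X 2) (X 0) = pderiv 1 Ω := by
  simp [jacBracket, Matrix.det_fin_three, pderiv_X]

theorem jac_anti (Ω p q : MvPolynomial (Fin 3) k) : jacBracket Ω p q = - jacBracket Ω q p := by
  simp [jacBracket, Matrix.det_fin_three]; ring

theorem jac_self (Ω p : MvPolynomial (Fin 3) k) : jacBracket Ω p p = 0 := by
  simp [jacBracket, Matrix.det_fin_three]; ring

theorem exists_jac (c : Fin 3) : ∃ c1 c2 : Fin 3, ∀ Ω : MvPolynomial (Fin 3) k,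
    jacBracket Ω (X c1) (X c2) = pderiv c Ω := by
  fin_cases c
  · exact ⟨1, 2, jac12⟩
  · exact ⟨2, 0, jac20⟩
  · exact ⟨0, 1, jac01⟩

theorem jac_hom {Ω : MvPolynomial (Fin 3) k} {n : ℕ} (h : Ω.IsHomogeneous n) (c c' : Fin 3) :
    (jacBracket Ω (X c) (X c')).IsHomogeneous (n - 1) := by
  have hp : ∀ c, (pderiv c Ω).IsHomogeneous (n - 1) := fun c => h.pderiv
  have hz := isHomogeneous_zero (Fin 3) k (n - 1)
  fin_cases c <;> fin_cases c'
  · simpa [jac_self] using hz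
  · simpa [jac01] using hp _
  · simpa [jac_anti Ω (X 0) (X 2), jac20] using (hp 1).neg
  · simpa [jac_anti Ω (X 1) (X 0), jac01] using (hp 2).neg
  · simpa [jac_self] using hz
  · simpa [jac12] using hp _
  · simpa [jac20] using hp _
  · simpa [jac_anti Ω (X 2) (X 1), jac12] using (hp 0).neg
  · simpa [jac_self] using hz

variable {Ω : Fin d → MvPolynomial (Fin 3) k} {ξ : Fin d → k} {n : Fin d → ℕ}

theorem natDegree_br (hhom : ∀ i, (Ω i).IsHomogeneous (n i)) (j : Fin d) (hn : 3 ≤ n j)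
    {m : ℕ} (hm : 1 ≤ m) {p q : M d k} (hp : (th j p).natDegree ≤ m)
    (hq : (th j q).natDegree ≤ m) : (th j (br Ω p q)).natDegree ≤ 2 * m + n j - 3 := by
  unfold br
  simp only [map_sum]
  refine Polynomial.natDegree_sum_le_of_forall_le _ _ fun l _ =>
    Polynomial.natDegree_sum_le_of_forall_le _ _ fun c _ =>
    Polynomial.natDegree_sum_le_of_forall_le _ _ fun c' _ => ?_
  rw [map_mul, map_mul]
  refine Polynomial.natDegree_mul_le.trans ((Nat.add_le_add_right Polynomial.natDegree_mul_le _).trans ?_)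
  by_cases hl : l = j
  · subst hl
    have h1 := natDegree_th_pderiv l c hp
    have h2 := natDegree_th_pderiv l c' hq
    have h3 := natDegree_th_em l (d := d) (jac_hom (hhom l) c c')
    omega
  · have h1 := natDegree_th_pderiv_ne j l hl c hp
    have h2 := natDegree_th_pderiv_ne j l hl c' hq
    have h3 : (th j (em d k l (jacBracket (Ω l) (X c) (X c')))).natDegree = 0 := by
      rw [th_em_ne j l hl, Polynomial.natDegree_C]
    omega

theorem eval_aeval (a : Fin d × Fin 3 → k) (u : Fin 3 → M d k) (q : MvPolynomial (Fin 3) k) :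
    eval a (aeval u q) = eval (fun c => eval a (u c)) q := by
  induction q using MvPolynomial.induction_on with
  | C r => simp
  | add p q hp hq => simp only [map_add, hp, hq]
  | mul_X p i hp => simp only [map_mul, hp, aeval_X, eval_X]

/-- `x` has a lift of degree at most `m` in the block `j`. -/
def HasDeg (Ω : Fin d → MvPolynomial (Fin 3) k) (ξ : Fin d → k) (j : Fin d) (m : ℕ)
    (x : ⨂[k] i, PQuot k (Ω i) (ξ i)) : Prop :=
  ∃ p, pi Ω ξ p = x ∧ (th j p).natDegree ≤ m

theorem exists_hasDeg (j : Fin d) (x : ⨂[k] i, PQuot k (Ω i) (ξ i)) : ∃ m, HasDeg Ω ξ j m x := by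
  obtain ⟨p, hp⟩ := pi_surj Ω ξ x
  exact ⟨_, p, hp, le_rfl⟩

theorem HasDeg.mono {j : Fin d} {m m' : ℕ} {x : ⨂[k] i, PQuot k (Ω i) (ξ i)}
    (h : HasDeg Ω ξ j m x) (hm : m ≤ m') : HasDeg Ω ξ j m' x := by
  obtain ⟨p, hp, h⟩ := h
  exact ⟨p, hp, h.trans hm⟩

theorem hasDeg_lower (hhom : ∀ i, (Ω i).IsHomogeneous (n i)) {j : Fin d} (hn : 1 ≤ n j) {p : M d k}
    {m : ℕ} (hm : (th j p).natDegree ≤ m + 1)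
    (hp : co j (m + 1) p ∈ J Ω (Function.update ξ j 0)) : HasDeg Ω ξ j m (pi Ω ξ p) := by
  obtain ⟨p', h1, h2⟩ := lower j hhom hn hm hp
  refine ⟨p', ?_, h2⟩
  have := (pi_eq_zero Ω ξ _).2 h1
  rw [map_sub, sub_eq_zero] at this
  exact this.symm

variable {P : ∀ i, PoissonStructure k (PQuot k (Ω i) (ξ i))}
    {PT : PoissonStructure k (⨂[k] i, PQuot k (Ω i) (ξ i))}

theorem main_step [CharZero k] [IsAlgClosed k] (hP : ∀ i, IsInducedBracket (Ω i) (ξ i) (P i))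
    (hPT : IsPiTensorBracket P PT)
    (hhom : ∀ i, (Ω i).IsHomogeneous (n i)) (hiso : ∀ i, HasIsolatedSingularity (Ω i))
    (f : (⨂[k] i, PQuot k (Ω i) (ξ i)) →ₐ[k] ⨂[k] i, PQuot k (Ω i) (ξ i))
    (hf : IsPoissonHom PT PT f) (i j : Fin d) (hn : 3 ≤ n j) (m : ℕ)
    (hm : 2 * (m + 1) + n j - 3 < (n i - 1) * (m + 1))
    (h : ∀ c, HasDeg Ω ξ j (m + 1) (f (pi Ω ξ (X (i, c))))) :
    ∀ c, HasDeg Ω ξ j m (f (pi Ω ξ (X (i, c)))) := by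
  choose p hp hdeg using h
  have hcomp : ∀ q, f (pi Ω ξ (em d k i q)) = pi Ω ξ (aeval p q) := by
    intro q
    have : (f.comp (pi Ω ξ)).comp (em d k i) = (pi Ω ξ).comp (aeval p) := by
      refine MvPolynomial.algHom_ext fun c => ?_
      simp [em_X, hp]
    exact DFunLike.congr_fun this q
  have key : ∀ c, aeval (fun c => co j (m + 1) (p c)) (pderiv c (Ω i)) ∈
      J Ω (Function.update ξ j 0) := by
    intro c
    obtain ⟨c1, c2, hc⟩ := exists_jac (k := k) c
    have hJ : br Ω (p c1) (p c2) - aeval p (pderiv c (Ω i)) ∈ J Ω ξ := by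
      rw [← pi_eq_zero, map_sub, ← bracket_pi hP hPT, hp, hp, ← hf, bracket_pi hP hPT, br_X_X, hc,
        hcomp, sub_self]
    have hhp : (pderiv c (Ω i)).IsHomogeneous (n i - 1) := (hhom i).pderiv
    have hth : th j (aeval p (pderiv c (Ω i))) = aeval (fun c => th j (p c)) (pderiv c (Ω i)) := by
      rw [← AlgHom.comp_apply, comp_aeval]
    have d1 := natDegree_br hhom j hn (by omega) (hdeg c1) (hdeg c2)
    have d2 := natDegree_aeval_hom hhp (m + 1) (fun c => th j (p c)) hdeg
    rw [← hth] at d2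
    have := top_mem j hhom hiso (by omega) hJ (m := (n i - 1) * (m + 1)) (by
      rw [map_sub]
      exact (Polynomial.natDegree_sub_le _ _).trans (max_le (by omega) d2))
    have e : co j ((n i - 1) * (m + 1)) (br Ω (p c1) (p c2) - aeval p (pderiv c (Ω i)))
        = - aeval (fun c => co j (m + 1) (p c)) (pderiv c (Ω i)) := by
      unfold co
      rw [map_sub, Polynomial.coeff_sub, Polynomial.coeff_eq_zero_of_natDegree_lt (by omega), hth,
        coeff_aeval_hom hhp (m + 1) _ hdeg, zero_sub]
    rw [e] at this
    exact (neg_mem_iff).1 this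
  intro c
  rw [← hp c]
  refine hasDeg_lower hhom (by omega) (hdeg c) (mem_J_of_eval _ _ n hhom hiso fun a ha => ?_)
  have : (fun c => eval a (co j (m + 1) (p c))) = 0 := by
    refine crit_zero (hhom i) (hiso i) _ fun c => ?_
    have h1 := eval_of_mem_J _ _ (key c) ha
    rw [← h1, eval_aeval]
  exact congrFun this c

theorem deg_down {Q : ℕ → Prop} {b : ℕ} (h : ∃ m, Q m) (hmono : ∀ m m', m ≤ m' → Q m → Q m')
    (hs : ∀ m, b ≤ m → Q (m + 1) → Q m) : Q b := by
  obtain ⟨m, hm⟩ := h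
  induction m with
  | zero => exact hmono _ _ (Nat.zero_le _) hm
  | succ m ih =>
    by_cases hb : b ≤ m
    · exact ih (hs m hb hm)
    · exact hmono _ _ (by omega) hm

theorem main_deg [CharZero k] [IsAlgClosed k] (hP : ∀ i, IsInducedBracket (Ω i) (ξ i) (P i))
    (hPT : IsPiTensorBracket P PT)
    (hhom : ∀ i, (Ω i).IsHomogeneous (n i)) (hiso : ∀ i, HasIsolatedSingularity (Ω i))
    (hdeg : ∀ i, 5 ≤ n i)
    (f : (⨂[k] i, PQuot k (Ω i) (ξ i)) →ₐ[k] ⨂[k] i, PQuot k (Ω i) (ξ i))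
    (hf : IsPoissonHom PT PT f) (i j : Fin d) (b : ℕ)
    (hij : n j < n i ∧ b = 0 ∨ j = i ∧ b = 1) :
    ∀ c, HasDeg Ω ξ j b (f (pi Ω ξ (X (i, c)))) := by
  refine deg_down (Q := fun m => ∀ c, HasDeg Ω ξ j m (f (pi Ω ξ (X (i, c))))) ?_
    (fun m m' h hm c => (hm c).mono h) fun m hm h => ?_
  · choose m hm using fun c => exists_hasDeg (Ω := Ω) (ξ := ξ) j (f (pi Ω ξ (X (i, c))))
    exact ⟨∑ c, m c, fun c => (hm c).mono (Finset.single_le_sum (fun _ _ => Nat.zero_le _)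
      (Finset.mem_univ c))⟩
  · have h5 := hdeg i
    have h5' := hdeg j
    refine main_step hP hPT hhom hiso f hf i j (by omega) m ?_ h
    obtain ⟨N, hN⟩ : ∃ N, n i = N + 5 := ⟨n i - 5, by omega⟩
    obtain ⟨N', hN'⟩ : ∃ N', n j = N' + 5 := ⟨n j - 5, by omega⟩
    rcases hij with ⟨h1, rfl⟩ | ⟨rfl, rfl⟩
    · rw [hN, hN', show N + 5 - 1 = N + 4 by omega]
      have : N' < N := by omega
      rw [show 2 * (m + 1) + (N' + 5) - 3 = 2 * (m + 1) + N' + 2 by omega]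
      nlinarith [Nat.zero_le (N * m)]
    · rw [hN, show N + 5 - 1 = N + 4 by omega,
        show 2 * (m + 1) + (N + 5) - 3 = 2 * (m + 1) + N + 2 by omega]
      nlinarith [Nat.zero_le (N * m)]

end

end DixTensor

/-! ### Part 6: the centralizer of a block, and conclusion -/

namespace DixTensor

open MvPolynomial PiTensorProduct

section
variable {k : Type*} [Field k] {d : ℕ}
variable {Ω : Fin d → MvPolynomial (Fin 3) k} {ξ : Fin d → k} {n : Fin d → ℕ}
variable {P : ∀ i, PoissonStructure k (PQuot k (Ω i) (ξ i))}
    {PT : PoissonStructure k (⨂[k] i, PQuot k (Ω i) (ξ i))}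

theorem cross_zero {g w a : Fin 3 → k} (h0 : g 1 * w 2 = g 2 * w 1) (h1 : g 2 * w 0 = g 0 * w 2)
    (h2 : g 0 * w 1 = g 1 * w 0) (haw : ∑ c, a c * w c = 0) (c : Fin 3) :
    w c * ∑ c', a c' * g c' = 0 := by
  have : w c * ∑ c', a c' * g c' = g c * ∑ c, a c * w c := by
    simp only [Fin.sum_univ_three]
    fin_cases c
    · simp; linear_combination (-a 1) * h2 + a 2 * h1
    · simp; linear_combination (a 0) * h2 - a 2 * h0
    · simp; linear_combination (-a 0) * h1 + a 1 * h0
  rw [this, haw, mul_zero]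

theorem center_step [CharZero k] [IsAlgClosed k] (hP : ∀ i, IsInducedBracket (Ω i) (ξ i) (P i))
    (hPT : IsPiTensorBracket P PT)
    (hhom : ∀ i, (Ω i).IsHomogeneous (n i)) (hiso : ∀ i, HasIsolatedSingularity (Ω i))
    (l : Fin d) (hn : 1 ≤ n l) (x : ⨂[k] i, PQuot k (Ω i) (ξ i))
    (hx : ∀ c, PT.bracket x (pi Ω ξ (X (l, c))) = 0) (m : ℕ) (h : HasDeg Ω ξ l (m + 1) x) :
    HasDeg Ω ξ l m x := by
  obtain ⟨p, rfl, hp⟩ := h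
  refine hasDeg_lower hhom hn hp (mem_J_of_eval _ _ n hhom hiso fun a ha => ?_)
  set u := co l (m + 1) p with hu
  have hem : ∀ c c', co l (n l - 1) (em d k l (jacBracket (Ω l) (X c) (X c'))) =
      em d k l (jacBracket (Ω l) (X c) (X c')) := by
    intro c c'
    unfold co
    rw [th_em l (jac_hom (hhom l) c c')]
    simp
  have key : ∀ c', ∑ c, pderiv (l, c) u * em d k l (jacBracket (Ω l) (X c) (X c')) ∈
      J Ω (Function.update ξ l 0) := by
    intro c'
    have hJ : br Ω p (X (l, c')) ∈ J Ω ξ := by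
      rw [← pi_eq_zero, ← bracket_pi hP hPT]; exact hx c'
    have h1 : ∀ c, (th l (pderiv (l, c) p)).natDegree ≤ m := fun c => natDegree_th_pderiv l c hp
    have h2 := fun c => natDegree_th_em l (d := d) (jac_hom (hhom l) c c')
    have := top_mem l hhom hiso hn hJ (m := m + (n l - 1)) (by
      rw [br_X_right, map_sum]
      refine Polynomial.natDegree_sum_le_of_forall_le _ _ fun c _ => ?_
      rw [map_mul]
      exact Polynomial.natDegree_mul_le.trans (Nat.add_le_add (h1 c) (h2 c)))
    convert this using 1
    unfold co
    rw [br_X_right, map_sum, Polynomial.finsetSum_coeff]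
    refine Finset.sum_congr rfl fun c _ => ?_
    rw [map_mul, Polynomial.coeff_mul_add_eq_of_natDegree_le (h1 c) (h2 c)]
    have e1 := hem c c'
    have e2 := co_pderiv l c m p
    unfold co at e1 e2
    rw [e1, e2]
    rfl
  set g : Fin 3 → k := fun c => eval a (pderiv (l, c) u) with hg
  set b : Fin 3 → k := fun c => a (l, c) with hb
  set w : Fin 3 → k := fun c => eval b (pderiv c (Ω l)) with hw
  have key' : ∀ c', ∑ c, g c * eval b (jacBracket (Ω l) (X c) (X c')) = 0 := by
    intro c'
    have := eval_of_mem_J _ _ (key c') ha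
    simpa only [map_sum, map_mul, eval_em] using this
  have k0 := key' 0
  have k1 := key' 1
  have k2 := key' 2
  rw [Fin.sum_univ_three] at k0 k1 k2
  rw [jac_self, jac_anti _ (X 1) (X 0), jac01, jac20] at k0
  rw [jac_self, jac_anti _ (X 2) (X 1), jac01, jac12] at k1
  rw [jac_self, jac_anti _ (X 0) (X 2), jac20, jac12] at k2
  simp only [map_neg, map_zero] at k0 k1 k2
  have hag : ∑ c, b c * g c = (m + 1 : ℕ) * eval a u := by
    have := congrArg (eval a) (euler_co l (m + 1) p)
    rw [map_sum] at this
    simpa [hg, hb, hu] using this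
  have haw : ∑ c, b c * w c = 0 := by
    have := congrArg (eval b) (hhom l).sum_X_mul_pderiv
    have h0 : eval b (Ω l) = 0 := by simpa using ha l
    rw [map_sum] at this
    simpa [hw, h0] using this
  have hz := cross_zero (g := g) (w := w) (a := b) (by linear_combination -k0)
    (by linear_combination -k1) (by linear_combination -k2) haw
  rw [hag] at hz
  have hm : ((m + 1 : ℕ) : k) ≠ 0 := Nat.cast_ne_zero.2 (by omega)
  by_contra hne
  have hw0 : ∀ c, w c = 0 := fun c => (mul_eq_zero.1 (hz c)).resolve_right (mul_ne_zero hm hne)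
  have hb0 : b = 0 := crit_zero (hhom l) (hiso l) b hw0
  rw [hb0] at hag
  simp only [Pi.zero_apply, zero_mul, Finset.sum_const_zero] at hag
  exact mul_ne_zero hm hne hag.symm

theorem center [CharZero k] [IsAlgClosed k] (hP : ∀ i, IsInducedBracket (Ω i) (ξ i) (P i))
    (hPT : IsPiTensorBracket P PT)
    (hhom : ∀ i, (Ω i).IsHomogeneous (n i)) (hiso : ∀ i, HasIsolatedSingularity (Ω i))
    (l : Fin d) (hn : 1 ≤ n l) (x : ⨂[k] i, PQuot k (Ω i) (ξ i))
    (hx : ∀ c, PT.bracket x (pi Ω ξ (X (l, c))) = 0) : HasDeg Ω ξ l 0 x :=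
  deg_down (exists_hasDeg l x) (fun _ _ h h' => h'.mono h)
    fun m _ h => center_step hP hPT hhom hiso l hn x hx m h

/-- A polynomial of degree `0` in block `j` does not see the coordinates of block `j`. -/
theorem eval_indep (j : Fin d) {p : M d k} (h : (th j p).natDegree ≤ 0) {a b : Fin d × Fin 3 → k}
    (hab : ∀ lc : Fin d × Fin 3, lc.1 ≠ j → a lc = b lc) : eval a p = eval b p := by
  have h0 : (th j p).eval 0 = p := by
    conv_rhs => rw [← eval_th j p]
    rw [Polynomial.eq_C_of_natDegree_le_zero h]; simp
  rw [← h0]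
  clear h h0
  induction p using MvPolynomial.induction_on with
  | C r => simp [th_C]
  | add p q hp hq => simp [hp, hq]
  | mul_X p i hp =>
    rw [map_mul, Polynomial.eval_mul, map_mul, map_mul, hp]
    congr 1
    by_cases hi : i.1 = j
    · simp [th, hi]
    · simp [th, hi, hab i hi]

theorem eval_fr' (i : Fin d) (a0 : Fin d × Fin 3 → k) (b : Fin 3 → k) (p : M d k) :
    eval b (fr i a0 p) = eval (fun lc => if lc.1 = i then b lc.2 else a0 lc) p := by
  induction p using MvPolynomial.induction_on with
  | C r => simp
  | add p q hp hq => simp [hp, hq]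
  | mul_X p c hp =>
    rw [map_mul, map_mul, map_mul, hp]
    congr 1
    by_cases hi : c.1 = i <;> simp [fr, hi]

/-- The span of `1` and the generators of block `i`. -/
noncomputable def U (Ω : Fin d → MvPolynomial (Fin 3) k) (ξ : Fin d → k) (i : Fin d) :
    Submodule k (⨂[k] i, PQuot k (Ω i) (ξ i)) :=
  Submodule.span k (Set.range fun o : Option (Fin 3) =>
    o.elim 1 fun c => pi Ω ξ (X (i, c)))

theorem one_mem_U (i : Fin d) : (1 : ⨂[k] i, PQuot k (Ω i) (ξ i)) ∈ U Ω ξ i :=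
  Submodule.subset_span ⟨none, rfl⟩

theorem X_mem_U (i : Fin d) (c : Fin 3) : pi Ω ξ (X (i, c)) ∈ U Ω ξ i :=
  Submodule.subset_span ⟨some c, rfl⟩

theorem th1_coeff_zero (q : MvPolynomial (Fin 3) k) : ∃ r, (th1 q).coeff 0 = C r := by
  induction q using MvPolynomial.induction_on with
  | C r => exact ⟨r, by simp [th1]⟩
  | add p q hp hq =>
    obtain ⟨r, hr⟩ := hp
    obtain ⟨s, hs⟩ := hq
    exact ⟨r + s, by simp [hr, hs]⟩
  | mul_X p i hp => exact ⟨0, by simp [th1]⟩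

theorem th1_coeff_one (i : Fin d) (q : MvPolynomial (Fin 3) k) :
    pi Ω ξ (em d k i ((th1 q).coeff 1)) ∈ U Ω ξ i := by
  induction q using MvPolynomial.induction_on with
  | C r =>
    have : (th1 (C r : MvPolynomial (Fin 3) k)).coeff 1 = 0 := by simp [th1, Polynomial.coeff_C]
    rw [this, map_zero, map_zero]; exact zero_mem _
  | add p q hp hq =>
    rw [map_add, Polynomial.coeff_add, map_add, map_add]; exact add_mem hp hq
  | mul_X p c hp =>
    obtain ⟨r, hr⟩ := th1_coeff_zero p
    have : (th1 (p * X c)).coeff 1 = r • X c := by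
      rw [map_mul, show th1 (X c : MvPolynomial (Fin 3) k) = Polynomial.X * Polynomial.C (X c) by
        simp [th1], ← mul_assoc, Polynomial.coeff_mul_C, Polynomial.coeff_mul_X, hr, smul_eq_C_mul]
    rw [this, map_smul, map_smul, em_X]
    exact Submodule.smul_mem _ _ (X_mem_U i c)

theorem th1_eval (q : MvPolynomial (Fin 3) k) : (th1 q).eval 1 = q := by
  induction q using MvPolynomial.induction_on with
  | C r => simp [th1]
  | add p q hp hq => simp [hp, hq]
  | mul_X p i hp => rw [map_mul, Polynomial.eval_mul, hp]; simp [th1]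

theorem mem_U_of_deg (i : Fin d) (q : MvPolynomial (Fin 3) k) (hq : (th1 q).natDegree ≤ 1) :
    pi Ω ξ (em d k i q) ∈ U Ω ξ i := by
  have h : q = (th1 q).coeff 0 + (th1 q).coeff 1 := by
    conv_lhs => rw [← th1_eval q, Polynomial.eval_eq_sum_range' (Nat.lt_succ_of_le hq)]
    simp [Finset.sum_range_succ]
  obtain ⟨r, hr⟩ := th1_coeff_zero q
  rw [h, map_add, map_add, hr]
  refine add_mem ?_ (th1_coeff_one i q)
  have : pi Ω ξ (em d k i (C r)) = r • 1 := by
    rw [show (C r : MvPolynomial (Fin 3) k) = r • 1 by rw [smul_eq_C_mul, mul_one], map_smul,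
      map_smul, map_one, map_one]
  rw [this]
  exact Submodule.smul_mem _ _ (one_mem_U i)

theorem mem_U [CharZero k] [IsAlgClosed k]
    (hhom : ∀ i, (Ω i).IsHomogeneous (n i)) (hiso : ∀ i, HasIsolatedSingularity (Ω i))
    {a0 : Fin d × Fin 3 → k} (ha0 : a0 ∈ V Ω ξ) (i : Fin d) (x : ⨂[k] i, PQuot k (Ω i) (ξ i))
    (h1 : HasDeg Ω ξ i 1 x) (h0 : ∀ j, j ≠ i → HasDeg Ω ξ j 0 x) : x ∈ U Ω ξ i := by
  classical
  obtain ⟨p, rfl, hp⟩ := h1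
  have hind : ∀ j, j ≠ i → ∀ a ∈ V Ω ξ, ∀ b ∈ V Ω ξ,
      (∀ lc : Fin d × Fin 3, lc.1 ≠ j → a lc = b lc) → eval a p = eval b p := by
    intro j hj a ha b hb hab
    obtain ⟨q, hq, hdq⟩ := h0 j hj
    have hJ : q - p ∈ J Ω ξ := by rw [← pi_eq_zero, map_sub, hq, sub_self]
    have ea := eval_of_mem_J _ _ hJ ha
    have eb := eval_of_mem_J _ _ hJ hb
    rw [map_sub, sub_eq_zero] at ea eb
    rw [← ea, ← eb, eval_indep j hdq hab]
  have hmix : ∀ a ∈ V Ω ξ, ∀ s : Finset (Fin d),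
      (fun lc : Fin d × Fin 3 => if lc.1 ∈ s then a0 lc else a lc) ∈ V Ω ξ := by
    intro a ha s l
    by_cases hl : l ∈ s
    · simpa [hl] using ha0 l
    · simpa [hl] using ha l
  have hfin : ∀ a ∈ V Ω ξ, ∀ s : Finset (Fin d), i ∉ s →
      eval (fun lc : Fin d × Fin 3 => if lc.1 ∈ s then a0 lc else a lc) p = eval a p := by
    intro a ha s
    induction s using Finset.induction_on with
    | empty => intro _; simp
    | insert j s hj ih =>
      intro his
      rw [Finset.mem_insert, not_or] at his
      rw [← ih his.2]
      refine hind j (Ne.symm his.1) _ (hmix a ha _) _ (hmix a ha _) fun lc hlc => ?_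
      simp [hlc]
  have hJ : p - em d k i (fr i a0 p) ∈ J Ω ξ := by
    refine mem_J_of_eval _ _ n hhom hiso fun a ha => ?_
    rw [map_sub, eval_em, eval_fr', sub_eq_zero, ← hfin a ha (Finset.univ.erase i) (by simp)]
    congr 2
    funext lc
    obtain ⟨l, c⟩ := lc
    by_cases hl : l = i
    · subst hl; simp
    · simp [hl]
  rw [← pi_eq_zero, map_sub, sub_eq_zero] at hJ
  rw [hJ]
  refine mem_U_of_deg i _ ?_
  rw [th1_fr]
  exact Polynomial.natDegree_map_le.trans hp

theorem bracket_U (hP : ∀ i, IsInducedBracket (Ω i) (ξ i) (P i))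
    (hPT : IsPiTensorBracket P PT) {i l : Fin d} (h : i ≠ l) (c : Fin 3)
    {y : ⨂[k] i, PQuot k (Ω i) (ξ i)} (hy : y ∈ U Ω ξ l) :
    PT.bracket (pi Ω ξ (X (i, c))) y = 0 := by
  unfold U at hy
  induction hy using Submodule.span_induction with
  | mem x hx =>
    obtain ⟨o, rfl⟩ := hx
    cases o with
    | none => exact bracket_one_right _ _
    | some c' =>
      change PT.bracket _ (pi Ω ξ (X (l, c'))) = 0
      rw [bracket_pi hP hPT, br_X_X_ne _ _ _ h, map_zero]
  | zero =>
    have := bracket_smul_right PT (0 : k) (pi Ω ξ (X (i, c))) 0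
    simpa using this
  | add x y _ _ hx hy => rw [bracket_add_right, hx, hy, add_zero]
  | smul r x _ hx => rw [bracket_smul_right, hx, smul_zero]

theorem map_U_eq (f : (⨂[k] i, PQuot k (Ω i) (ξ i)) →ₐ[k] ⨂[k] i, PQuot k (Ω i) (ξ i))
    (hinj : Function.Injective f) (i : Fin d) (h : ∀ c, f (pi Ω ξ (X (i, c))) ∈ U Ω ξ i) :
    ∀ x ∈ U Ω ξ i, ∃ y ∈ U Ω ξ i, f y = x := by
  have hle : (U Ω ξ i).map f.toLinearMap ≤ U Ω ξ i := by
    conv_lhs => unfold U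
    rw [Submodule.map_span, Submodule.span_le]
    rintro _ ⟨_, ⟨o, rfl⟩, rfl⟩
    cases o with
    | none =>
      change f 1 ∈ U Ω ξ i
      rw [map_one]; exact one_mem_U i
    | some c => exact h c
  haveI : FiniteDimensional k (U Ω ξ i) := FiniteDimensional.span_of_finite k (Set.finite_range _)
  have e := (Submodule.equivMapOfInjective f.toLinearMap hinj (U Ω ξ i)).finrank_eq
  have := Submodule.eq_of_le_of_finrank_eq hle e.symm
  intro x hx
  rw [← this] at hx
  obtain ⟨y, hy, rfl⟩ := hx
  exact ⟨y, hy, rfl⟩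

theorem main [CharZero k] [IsAlgClosed k] (hP : ∀ i, IsInducedBracket (Ω i) (ξ i) (P i))
    (hPT : IsPiTensorBracket P PT)
    (hhom : ∀ i, (Ω i).IsHomogeneous (n i)) (hiso : ∀ i, HasIsolatedSingularity (Ω i))
    (hdeg : ∀ i, 5 ≤ n i) (hdist : Function.Injective n) :
    IsDixmier k (⨂[k] i, PQuot k (Ω i) (ξ i)) PT := by
  intro f hf hinj
  refine ⟨hinj, ?_⟩
  by_cases hV : ∃ a0, a0 ∈ V Ω ξ
  · obtain ⟨a0, ha0⟩ := hV
    have key : ∀ N i, ∑ j, n j - n i ≤ N → ∀ x ∈ U Ω ξ i, ∃ y ∈ U Ω ξ i, f y = x := by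
      intro N
      induction N using Nat.strong_induction_on with
      | _ N ih =>
        intro i hi
        refine map_U_eq f hinj i fun c => mem_U hhom hiso ha0 i _
          (main_deg hP hPT hhom hiso hdeg f hf i i 1 (Or.inr ⟨rfl, rfl⟩) c) fun j hj => ?_
        rcases lt_or_gt_of_ne (fun h => hj (hdist h) : n j ≠ n i) with h | h
        · exact main_deg hP hPT hhom hiso hdeg f hf i j 0 (Or.inl ⟨h, rfl⟩) c
        · have hle : n j ≤ ∑ j, n j :=
            Finset.single_le_sum (fun _ _ => Nat.zero_le _) (Finset.mem_univ j)
          refine center hP hPT hhom hiso j (by have := hdeg j; omega) _ fun c' => ?_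
          obtain ⟨y, hy, hfy⟩ := ih (∑ j, n j - n j) (by omega) j le_rfl _ (X_mem_U j c')
          rw [← hfy, ← hf, bracket_U hP hPT (Ne.symm hj) c hy, map_zero]
    intro x
    obtain ⟨p, rfl⟩ := pi_surj Ω ξ x
    change pi Ω ξ p ∈ f.range
    induction p using MvPolynomial.induction_on with
    | C r => rw [algHom_C]; exact Subalgebra.algebraMap_mem _ _
    | add p q hp hq => rw [map_add]; exact add_mem hp hq
    | mul_X p i hp =>
      rw [map_mul]
      refine mul_mem hp ?_
      obtain ⟨y, -, hy⟩ := key _ i.1 le_rfl _ (X_mem_U i.1 i.2)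
      exact ⟨y, hy⟩
  · have h1 : (1 : M d k) ∈ J Ω ξ :=
      mem_J_of_eval _ _ n hhom hiso fun a ha => absurd ⟨a, ha⟩ hV
    rw [← pi_eq_zero, map_one] at h1
    intro x
    exact ⟨x, by rw [← mul_one (f x), ← mul_one x, h1, mul_zero, mul_zero]⟩

end

end DixTensor

open PiTensorProduct in
/-- Theorem 0.2(1): the tensor product of the `P_{Ωᵢ-ξᵢ}` for i.s. potentials `Ωᵢ` of pairwise
distinct degrees `≥ 5` is Dixmier. -/
theorem tensorProduct_of_potentials_isDixmier
    {𝕜 : Type*} [Field 𝕜] [IsAlgClosed 𝕜] [CharZero 𝕜]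
    (d : ℕ) (Ω : Fin d → MvPolynomial (Fin 3) 𝕜) (n : Fin d → ℕ)
    (hhom : ∀ i, (Ω i).IsHomogeneous (n i))
    (hiso : ∀ i, HasIsolatedSingularity (Ω i))
    (hdeg : ∀ i, 5 ≤ n i)
    (hdist : Function.Injective n)
    (ξ : Fin d → 𝕜)
    (P : ∀ i, PoissonStructure 𝕜 (PQuot 𝕜 (Ω i) (ξ i)))
    (hP : ∀ i, IsInducedBracket (Ω i) (ξ i) (P i))
    (PT : PoissonStructure 𝕜 (⨂[𝕜] i, PQuot 𝕜 (Ω i) (ξ i)))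
    (hPT : IsPiTensorBracket P PT) :
    IsDixmier 𝕜 (⨂[𝕜] i, PQuot 𝕜 (Ω i) (ξ i)) PT := by
  exact DixTensor.main hP hPT hhom hiso hdeg hdist
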